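/- Let S be an ordered semigroup with real multiplication satisfying axioms O1–O6 and having a countable dense subset. Then for all f, g, h ∈ S, (f ∧ g) + h = (f + h) ∧ (g + h), where ∧ denotes the greatest lower bound in S. -/

import Mathlib

open scoped ENNReal

/-- `CC s t` : `s` is (sequentially) compactly contained in `t`, written `s ≪ t`. -/
def CC {S : Type*} [AddCommMonoid S] [PartialOrder S] (s t : S) : Prop :=
  ∀ u : ℕ → S, Monotone u → ∀ x : S, IsLUB (Set.range u) x → t ≤ x → ∃ n, s ≤ u n

/-- An ordered semigroup (positive, with translation invariant order) satisfying axioms O1-O5. -/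
structure CuO5 (S : Type*) [AddCommMonoid S] [PartialOrder S] : Prop where
  addRightMono : ∀ {s t : S}, s ≤ t → ∀ r : S, s + r ≤ t + r
  zeroLe : ∀ s : S, 0 ≤ s
  O1 : ∀ u : ℕ → S, Monotone u → ∃ x : S, IsLUB (Set.range u) x
  O2 : ∀ s : S, ∃ u : ℕ → S, (∀ n, CC (u n) (u (n + 1))) ∧ IsLUB (Set.range u) s
  O3 : ∀ {s₁ t₁ s₂ t₂ : S}, CC s₁ t₁ → CC s₂ t₂ → CC (s₁ + s₂) (t₁ + t₂)
  O4 : ∀ u v : ℕ → S, Monotone u → Monotone v → ∀ x y : S,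
    IsLUB (Set.range u) x → IsLUB (Set.range v) y →
    IsLUB (Set.range fun n => u n + v n) (x + y)
  O5 : ∀ {s' s t : S}, CC s' s → s ≤ t → ∃ r : S, s' + r ≤ t ∧ t ≤ s + r

/-- Axioms O1-O6. -/
structure CuO6 (S : Type*) [AddCommMonoid S] [PartialOrder S] extends CuO5 S : Prop where
  O6 : ∀ {s r t : S}, s ≤ r + t → ∀ {s' : S}, CC s' s →
    ∃ r' t' : S, s' ≤ r' + t' ∧ r' ≤ r ∧ r' ≤ s ∧ t' ≤ t ∧ t' ≤ s

/-- A functional on `S`: additive, order preserving, zero preserving map to `[0,∞]`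
preserving suprema of increasing sequences. -/
structure IsFunctional {S : Type*} [AddCommMonoid S] [PartialOrder S] (l : S → ℝ≥0∞) : Prop where
  map_zero : l 0 = 0
  map_add : ∀ s t : S, l (s + t) = l s + l t
  mono : ∀ {s t : S}, s ≤ t → l s ≤ l t
  map_sup : ∀ u : ℕ → S, Monotone u → ∀ x : S, IsLUB (Set.range u) x → l x = ⨆ n, l (u n)

/-- Real multiplication on `S` : a map `(0,∞] × S → S` additive, order preserving and
sup-(of increasing sequences)-preserving in each variable, with `1 · s = s`.
Scalars are elements of `ℝ≥0∞` required to be positive. -/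
structure RealMul (S : Type*) [AddCommMonoid S] [PartialOrder S] where
  smul : ℝ≥0∞ → S → S
  add_left : ∀ {a b : ℝ≥0∞}, 0 < a → 0 < b → ∀ s : S, smul (a + b) s = smul a s + smul b s
  add_right : ∀ {a : ℝ≥0∞}, 0 < a → ∀ s t : S, smul a (s + t) = smul a s + smul a t
  mono_left : ∀ {a b : ℝ≥0∞}, 0 < a → a ≤ b → ∀ s : S, smul a s ≤ smul b s
  mono_right : ∀ {a : ℝ≥0∞}, 0 < a → ∀ {s t : S}, s ≤ t → smul a s ≤ smul a t
  sup_left : ∀ u : ℕ → ℝ≥0∞, Monotone u → 0 < u 0 → ∀ s : S,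
    IsLUB (Set.range fun n => smul (u n) s) (smul (⨆ n, u n) s)
  sup_right : ∀ {a : ℝ≥0∞}, 0 < a → ∀ u : ℕ → S, Monotone u → ∀ x : S,
    IsLUB (Set.range u) x → IsLUB (Set.range fun n => smul a (u n)) (smul a x)
  one_smul : ∀ s : S, smul 1 s = s

/-- `D` is a dense subset of `S`: every element of `S` is the supremum of a rapidly
increasing sequence of elements of `D`. -/
def IsDenseSub {S : Type*} [AddCommMonoid S] [PartialOrder S] (D : Set S) : Prop :=
  ∀ s : S, ∃ u : ℕ → S, (∀ n, u n ∈ D) ∧ (∀ n, CC (u n) (u (n + 1))) ∧ IsLUB (Set.range u) s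

/-- `m` is the least upper bound of the functionals `l₁` and `l₂` in `F(S)`
(pointwise order). -/
def IsFSup {S : Type*} [AddCommMonoid S] [PartialOrder S] (l₁ l₂ m : S → ℝ≥0∞) : Prop :=
  IsFunctional m ∧ (∀ s, l₁ s ≤ m s) ∧ (∀ s, l₂ s ≤ m s) ∧
    ∀ d : S → ℝ≥0∞, IsFunctional d → (∀ s, l₁ s ≤ d s) → (∀ s, l₂ s ≤ d s) → ∀ s, m s ≤ d s

/-- `m` is the greatest lower bound of the functionals `l₁` and `l₂` in `F(S)`
(pointwise order). -/
def IsFInf {S : Type*} [AddCommMonoid S] [PartialOrder S] (l₁ l₂ m : S → ℝ≥0∞) : Prop :=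
  IsFunctional m ∧ (∀ s, m s ≤ l₁ s) ∧ (∀ s, m s ≤ l₂ s) ∧
    ∀ d : S → ℝ≥0∞, IsFunctional d → (∀ s, d s ≤ l₁ s) → (∀ s, d s ≤ l₂ s) → ∀ s, d s ≤ m s

/-- An isomorphism of ordered semigroups between `S` and the extended natural numbers. -/
def IsOrdSemigroupIso {S : Type*} [AddCommMonoid S] [PartialOrder S] (e : S ≃ ℕ∞) : Prop :=
  (∀ a b : S, e (a + b) = e a + e b) ∧ e 0 = 0 ∧ ∀ a b : S, a ≤ b ↔ e a ≤ e b
namespace CuO5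

variable {S : Type*} [AddCommMonoid S] [PartialOrder S]

theorem add_mono (hS : CuO5 S) {a b c d : S} (hab : a ≤ b) (hcd : c ≤ d) : a + c ≤ b + d := by
  have h := hS.addRightMono hcd b
  rw [add_comm c, add_comm d] at h
  exact (hS.addRightMono hab c).trans h

theorem le_add_right (hS : CuO5 S) (a b : S) : a ≤ a + b := by
  simpa using hS.add_mono le_rfl (hS.zeroLe b)

theorem nsmul_mono (hS : CuO5 S) (n : ℕ) {a b : S} (hab : a ≤ b) : n • a ≤ n • b := by
  induction n with
  | zero => simp
  | succ n ih => simpa only [succ_nsmul] using hS.add_mono ih hab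

theorem sum_mono (hS : CuO5 S) (n : ℕ) {a b : ℕ → S} (hab : ∀ i < n, a i ≤ b i) :
    ∑ i ∈ Finset.range n, a i ≤ ∑ i ∈ Finset.range n, b i := by
  induction n with
  | zero => simp
  | succ n ih =>
    simpa only [Finset.sum_range_succ] using
      hS.add_mono (ih fun i hi => hab i (by omega)) (hab n (by omega))

/-- Cancellation up to an arbitrarily small multiple of the cancelled element, expressed
with natural multiples. -/
theorem nsmul_le_of_add_le_add_right (hS : CuO5 S) {x y z : S} (h : x + z ≤ y + z) (n : ℕ) :
    n • x ≤ n • y + z := by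
  have key : n • x + z ≤ n • y + z := by
    induction n with
    | zero => simp
    | succ n ih =>
      calc (n + 1) • x + z = n • x + (x + z) := by rw [succ_nsmul, add_assoc]
        _ ≤ n • x + (y + z) := hS.add_mono le_rfl h
        _ = (n • x + z) + y := by abel
        _ ≤ (n • y + z) + y := hS.add_mono ih le_rfl
        _ = (n + 1) • y + z := by rw [succ_nsmul]; abel
  exact (hS.le_add_right _ _).trans key

end CuO5

namespace CC

variable {S : Type*} [AddCommMonoid S] [PartialOrder S]

theorem le {s t : S} (h : CC s t) : s ≤ t := by
  obtain ⟨_, hn⟩ := h (fun _ => t) monotone_const t (by simp) le_rfl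
  exact hn

theorem trans_le {s t r : S} (h : CC s t) (htr : t ≤ r) : CC s r :=
  fun u hu x hx hrx => h u hu x hx (htr.trans hrx)

theorem of_le {s t r : S} (hst : s ≤ t) (h : CC t r) : CC s r := fun u hu x hx hrx =>
  let ⟨n, hn⟩ := h u hu x hx hrx
  ⟨n, hst.trans hn⟩

theorem zero (hS : CuO5 S) : CC (0 : S) 0 := fun u _ _ _ _ => ⟨0, hS.zeroLe (u 0)⟩

theorem sum (hS : CuO5 S) (n : ℕ) {a b : ℕ → S} (h : ∀ i, CC (a i) (b i)) :
    CC (∑ i ∈ Finset.range n, a i) (∑ i ∈ Finset.range n, b i) := by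
  induction n with
  | zero => simpa using zero hS
  | succ n ih => simpa only [Finset.sum_range_succ] using hS.O3 ih (h n)

theorem nsmul (hS : CuO5 S) (n : ℕ) {a b : S} (h : CC a b) : CC (n • a) (n • b) := by
  simpa using sum hS n (a := fun _ => a) (b := fun _ => b) fun _ => h

end CC

namespace CuO5

variable {S : Type*} [AddCommMonoid S] [PartialOrder S]

theorem monotone_of_cc {u : ℕ → S} (hu : ∀ n, CC (u n) (u (n + 1))) : Monotone u :=
  monotone_nat_of_le_succ fun n => (hu n).le

theorem cc_of_isLUB {u : ℕ → S} (hu : ∀ n, CC (u n) (u (n + 1))) {s : S}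
    (hs : IsLUB (Set.range u) s) (n : ℕ) : CC (u n) s :=
  (hu n).trans_le (hs.1 ⟨n + 1, rfl⟩)

theorem exists_cc_between (hS : CuO5 S) {s t : S} (h : CC s t) : ∃ r, CC s r ∧ CC r t := by
  obtain ⟨u, hu, ht⟩ := hS.O2 t
  obtain ⟨n, hn⟩ := h u (monotone_of_cc hu) t ht le_rfl
  exact ⟨u (n + 1), .of_le hn (hu n), cc_of_isLUB hu ht _⟩

theorem le_of_forall_cc (hS : CuO5 S) {s t : S} (h : ∀ r, CC r s → r ≤ t) : s ≤ t := by
  obtain ⟨u, hu, hs⟩ := hS.O2 s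
  refine hs.2 ?_
  rintro _ ⟨n, rfl⟩
  exact h _ (cc_of_isLUB hu hs n)

theorem isLUB_nsmul (hS : CuO5 S) (n : ℕ) {u : ℕ → S} (hu : Monotone u) {x : S}
    (hx : IsLUB (Set.range u) x) : IsLUB (Set.range fun k => n • u k) (n • x) := by
  induction n with
  | zero => simp
  | succ n ih =>
    simp only [succ_nsmul]
    exact hS.O4 _ _ (fun i j hij => hS.nsmul_mono n (hu hij)) hu _ _ ih hx

theorem exists_cc_nsmul_add (hS : CuO5 S) {s t a b : S} (n : ℕ) (hst : CC s t)
    (ht : t ≤ n • (a + b)) : ∃ a' b', CC a' a ∧ CC b' b ∧ s ≤ n • (a' + b') := by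
  obtain ⟨u, hu, ha⟩ := hS.O2 a
  obtain ⟨v, hv, hb⟩ := hS.O2 b
  have hum := monotone_of_cc hu
  have hvm := monotone_of_cc hv
  have hsum : Monotone fun k => u k + v k := fun i j hij => hS.add_mono (hum hij) (hvm hij)
  obtain ⟨k, hk⟩ := hst _ (fun i j hij => hS.nsmul_mono n (hsum hij)) _
    (hS.isLUB_nsmul n hsum (hS.O4 u v hum hvm a b ha hb)) ht
  exact ⟨u k, v k, cc_of_isLUB hu ha k, cc_of_isLUB hv hb k, hk⟩

theorem exists_cc_add (hS : CuO5 S) {s t a b : S} (hst : CC s t) (ht : t ≤ a + b) :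
    ∃ b', CC b' b ∧ s ≤ a + b' := by
  obtain ⟨a', b', ha, hb, h⟩ := hS.exists_cc_nsmul_add 1 hst (by simpa using ht)
  exact ⟨b', hb, h.trans (by simpa using hS.add_mono ha.le le_rfl)⟩

end CuO5

namespace RealMul

variable {S : Type*} [AddCommMonoid S] [PartialOrder S]

theorem nsmul_smul (rm : RealMul S) {n : ℕ} (hn : 1 ≤ n) {a : ℝ≥0∞} (ha : 0 < a) (s : S) :
    n • rm.smul a s = rm.smul (n * a) s := by
  induction n, hn using Nat.le_induction with
  | base => simp
  | succ n hn ih =>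
    have hpos : 0 < (n : ℝ≥0∞) * a :=
      ENNReal.mul_pos (by simpa using Nat.one_le_iff_ne_zero.1 hn) ha.ne'
    rw [succ_nsmul, ih, Nat.cast_succ, add_mul, one_mul, rm.add_left hpos ha]

theorem smul_nsmul (rm : RealMul S) {n : ℕ} (hn : 1 ≤ n) {a : ℝ≥0∞} (ha : 0 < a) (s : S) :
    rm.smul a (n • s) = n • rm.smul a s := by
  induction n, hn using Nat.le_induction with
  | base => simp
  | succ n hn ih => rw [succ_nsmul, rm.add_right ha, ih, succ_nsmul]

theorem nsmul_inv_smul (rm : RealMul S) {n : ℕ} (hn : 1 ≤ n) (s : S) :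
    n • rm.smul (n : ℝ≥0∞)⁻¹ s = s := by
  rw [rm.nsmul_smul hn (by simp), ENNReal.mul_inv_cancel _ (by simp), rm.one_smul]
  simpa using Nat.one_le_iff_ne_zero.1 hn

theorem exists_nsmul_eq (rm : RealMul S) {n : ℕ} (hn : 1 ≤ n) (s : S) : ∃ t, n • t = s :=
  ⟨_, rm.nsmul_inv_smul hn s⟩

theorem le_of_nsmul_le (rm : RealMul S) {n : ℕ} (hn : 1 ≤ n) {s t : S}
    (h : n • s ≤ n • t) : s ≤ t := by
  have hpos : 0 < (n : ℝ≥0∞)⁻¹ := by simp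
  simpa only [rm.smul_nsmul hn hpos, rm.nsmul_inv_smul hn] using rm.mono_right hpos h

theorem cc_of_nsmul (rm : RealMul S) (hS : CuO5 S) {n : ℕ} (hn : 1 ≤ n) {s t : S}
    (h : CC (n • s) (n • t)) : CC s t := by
  intro u hu x hx htx
  obtain ⟨k, hk⟩ := h _ (fun i j hij => hS.nsmul_mono n (hu hij)) _
    (hS.isLUB_nsmul n hu hx) (hS.nsmul_mono n htx)
  exact ⟨k, rm.le_of_nsmul_le hn hk⟩

theorem le_of_forall_nsmul_le (rm : RealMul S) {x y : S}
    (h : ∀ n : ℕ, n • x ≤ (n + 3) • y) : x ≤ y := by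
  let c : ℕ → ℝ := fun n => 1 - 3 / ((n : ℝ) + 4)
  have hc : ∀ n, c n = (n + 1) / (n + 4) := fun n => by
    simp only [c]; field_simp; ring
  have hmono : Monotone c := fun i j hij => by
    simp only [c]
    gcongr
  have htend : Filter.Tendsto c Filter.atTop (nhds 1) := by
    have h0 : Filter.Tendsto (fun n : ℕ => 3 / ((n : ℝ) + 4)) Filter.atTop (nhds 0) :=
      tendsto_const_nhds.div_atTop
        (Filter.tendsto_atTop_add_const_right _ _ tendsto_natCast_atTop_atTop)
    simpa [c] using tendsto_const_nhds.sub h0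
  have hcpos : ∀ n, 0 < ENNReal.ofReal (c n) := fun n => by
    rw [ENNReal.ofReal_pos, hc]; positivity
  have hmono' : Monotone fun n => ENNReal.ofReal (c n) :=
    fun i j hij => ENNReal.ofReal_le_ofReal (hmono hij)
  have hsup : ⨆ n, ENNReal.ofReal (c n) = 1 :=
    iSup_eq_of_tendsto hmono' (by simpa using ENNReal.tendsto_ofReal htend)
  have hlub := rm.sup_left _ hmono' (hcpos 0) x
  rw [hsup, rm.one_smul] at hlub
  refine hlub.2 ?_
  rintro _ ⟨n, rfl⟩
  refine rm.le_of_nsmul_le (n := n + 4) (by omega) ?_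
  have hmul : ((n + 4 : ℕ) : ℝ≥0∞) * ENNReal.ofReal (c n) = ((n + 1 : ℕ) : ℝ≥0∞) * 1 := by
    rw [← ENNReal.ofReal_natCast, ← ENNReal.ofReal_mul (by positivity), hc, mul_one,
      ← ENNReal.ofReal_natCast (n + 1)]
    congr 1
    push_cast
    field_simp
  calc (n + 4) • rm.smul (ENNReal.ofReal (c n)) x
      = (n + 1) • rm.smul 1 x := by
        rw [rm.nsmul_smul (by omega) (hcpos n), hmul, ← rm.nsmul_smul (by omega) one_pos]
    _ = (n + 1) • x := by rw [rm.one_smul]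
    _ ≤ (n + 4) • y := h (n + 1)

theorem le_add_of_add_le_add_right (rm : RealMul S) (hS : CuO5 S) {n : ℕ} (hn : 1 ≤ n)
    {x y z w : S} (h : x + z ≤ y + z) (hz : z ≤ n • w) : x ≤ y + w := by
  refine rm.le_of_nsmul_le hn ?_
  rw [nsmul_add]
  exact (hS.nsmul_le_of_add_le_add_right h n).trans (hS.add_mono le_rfl hz)

/-- Averaging a rapidly increasing chain produces compactly contained elements which differ
by a small multiple of the ambient element. -/
theorem exists_cc_le_add (rm : RealMul S) (hS : CuO5 S) {n : ℕ} (hn : 1 ≤ n) {f' f w : S}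
    (hf : CC f' f) (hw : n • w = f) : ∃ b c, CC b c ∧ f' ≤ b ∧ c ≤ f ∧ c ≤ b + w := by
  obtain ⟨u, hu, hsup⟩ := hS.O2 f
  obtain ⟨k, hk⟩ := hf u (CuO5.monotone_of_cc hu) f hsup le_rfl
  choose e he using fun i => rm.exists_nsmul_eq hn (u (k + i))
  have hecc : ∀ i, CC (e i) (e (i + 1)) := fun i =>
    rm.cc_of_nsmul hS hn (by rw [he, he]; exact hu (k + i))
  have hew : ∀ i, e i ≤ w := fun i =>
    rm.le_of_nsmul_le hn (by rw [he, hw]; exact hsup.1 ⟨_, rfl⟩)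
  refine ⟨∑ i ∈ Finset.range n, e i, ∑ i ∈ Finset.range n, e (i + 1),
    CC.sum hS n hecc, ?_, ?_, ?_⟩
  · calc f' ≤ n • e 0 := by rw [he]; exact hk
      _ = ∑ i ∈ Finset.range n, e 0 := by simp
      _ ≤ _ := hS.sum_mono n fun i _ => CuO5.monotone_of_cc hecc (Nat.zero_le i)
  · calc ∑ i ∈ Finset.range n, e (i + 1) ≤ ∑ i ∈ Finset.range n, w :=
        hS.sum_mono n fun i _ => hew _
      _ = f := by simp [hw]
  · calc ∑ i ∈ Finset.range n, e (i + 1) ≤ ∑ i ∈ Finset.range n, e (i + 1) + e 0 :=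
        hS.le_add_right _ _
      _ = ∑ i ∈ Finset.range n, e i + e n := by
        rw [← Finset.sum_range_succ', Finset.sum_range_succ]
      _ ≤ _ := hS.add_mono le_rfl (hew n)

end RealMul

namespace CuO6

variable {S : Type*} [AddCommMonoid S] [PartialOrder S]

theorem exists_le_add_add (hS : CuO6 S) {s' s a b c : S} (hs : CC s' s)
    (h : s ≤ a + (b + c)) :
    ∃ a' b', a' ≤ a ∧ a' ≤ s ∧ b' ≤ b ∧ b' ≤ s ∧ s' ≤ a' + b' + c := by
  obtain ⟨s'', h1, h2⟩ := hS.exists_cc_between hs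
  obtain ⟨a', t, hat, ha, has, htbc, hts⟩ := hS.O6 h h2
  obtain ⟨t', htt, hst⟩ := hS.exists_cc_add h1 hat
  obtain ⟨b', c', hbc, hb, hbt, hc, -⟩ := hS.O6 htbc htt
  refine ⟨a', b', ha, has, hb, hbt.trans hts, hst.trans ?_⟩
  rw [add_assoc]
  exact hS.add_mono le_rfl (hbc.trans (hS.add_mono le_rfl hc))

/-- Approximate Riesz decomposition. -/
theorem exists_riesz (hS : CuO6 S) (rm : RealMul S) (n : ℕ) {x' x f h : S} (hx : CC x' x)
    (hxfh : x ≤ f + h) :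
    ∃ f₁ h₁, f₁ ≤ f ∧ h₁ ≤ h ∧ f₁ + h₁ ≤ x ∧ n • x' ≤ (n + 2) • (f₁ + h₁) := by
  have hS5 := hS.toCuO5
  induction n generalizing x' with
  | zero => exact ⟨0, 0, hS.zeroLe f, hS.zeroLe h, by simpa using hS.zeroLe x, by simp⟩
  | succ n ih =>
    obtain ⟨x'', hx1, hx2⟩ := hS5.exists_cc_between hx
    obtain ⟨f₁, h₁, hf, hh, hfhx, hn⟩ := ih hx2
    obtain ⟨f₀, h₀, hf₀, hh₀, hn₀⟩ := hS5.exists_cc_nsmul_add (n + 2) (hx1.nsmul hS5 n) hn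
    have hN : 1 ≤ 2 * (n + 2) := by omega
    obtain ⟨wf, hwf⟩ := rm.exists_nsmul_eq hN f₁
    obtain ⟨wh, hwh⟩ := rm.exists_nsmul_eq hN h₁
    obtain ⟨fb, fc, hfbc, hfb, hfc, hfcw⟩ := rm.exists_cc_le_add hS5 hN hf₀ hwf
    obtain ⟨hb, hc, hhbc, hhb, hhc, hhcw⟩ := rm.exists_cc_le_add hS5 hN hh₀ hwh
    obtain ⟨u, hu1, hu2⟩ := hS5.O5 hfbc (hfc.trans hf)
    obtain ⟨v, hv1, hv2⟩ := hS5.O5 hhbc (hhc.trans hh)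
    obtain ⟨r, hr1, hr2⟩ := hS5.O5 (hS5.O3 hfbc hhbc) ((hS5.add_mono hfc hhc).trans hfhx)
    have hzc : fc + hc ≤ (fb + hb) + (wf + wh) :=
      (hS5.add_mono hfcw hhcw).trans_eq (by abel)
    have hzb : fb + hb ≤ (2 * (n + 2)) • (wf + wh) := by
      rw [nsmul_add, hwf, hwh]
      exact hS5.add_mono (hfbc.le.trans hfc) (hhbc.le.trans hhc)
    have hru : r ≤ u + (v + 2 • (wf + wh)) := by
      have : r + (fb + hb) ≤ (u + v + (wf + wh)) + (fb + hb) :=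
        calc r + (fb + hb) ≤ x := by rwa [add_comm]
          _ ≤ (fc + u) + (hc + v) := hxfh.trans (hS5.add_mono hu2 hv2)
          _ = (fc + hc) + (u + v) := by abel
          _ ≤ (fb + hb) + (wf + wh) + (u + v) := hS5.add_mono hzc le_rfl
          _ = _ := by abel
      exact (rm.le_add_of_add_le_add_right hS5 hN this hzb).trans_eq (by rw [two_nsmul]; abel)
    obtain ⟨r', hr', hxr'⟩ := hS5.exists_cc_add hx (hr2.trans (hS5.add_mono hzc le_rfl))
    obtain ⟨f₂, h₂, hf₂u, hf₂r, hh₂v, hh₂r, hrfh⟩ := hS.exists_le_add_add hr' hru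
    obtain ⟨φ, hφ⟩ := rm.exists_nsmul_eq (n := 2) (by omega) f₂
    obtain ⟨η, hη⟩ := rm.exists_nsmul_eq (n := 2) (by omega) h₂
    have hφη : φ + η ≤ r := rm.le_of_nsmul_le (n := 2) (by omega) (by
      rw [nsmul_add, hφ, hη, two_nsmul]
      exact hS5.add_mono hf₂r hh₂r)
    have hφu : φ ≤ u := le_trans (by rw [← hφ, two_nsmul]; exact hS5.le_add_right _ _) hf₂u
    have hηv : η ≤ v := le_trans (by rw [← hη, two_nsmul]; exact hS5.le_add_right _ _) hh₂v
    have hM : 1 ≤ n + 3 := by omega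
    obtain ⟨F, hF⟩ := rm.exists_nsmul_eq hM ((n + 2) • (fb + φ + 2 • wf))
    obtain ⟨H, hH⟩ := rm.exists_nsmul_eq hM ((n + 2) • (hb + η + 2 • wh))
    have hscale : ∀ a w : S, (n + 2) • (a + 2 • w) = (n + 2) • a + (2 * (n + 2)) • w :=
      fun a w => by rw [nsmul_add, ← mul_nsmul]
    refine ⟨F, H, rm.le_of_nsmul_le hM ?_, rm.le_of_nsmul_le hM ?_,
      rm.le_of_nsmul_le hM ?_, ?_⟩
    · rw [hF, hscale, hwf, succ_nsmul f]
      exact hS5.add_mono (hS5.nsmul_mono _ ((hS5.add_mono le_rfl hφu).trans hu1)) hf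
    · rw [hH, hscale, hwh, succ_nsmul h]
      exact hS5.add_mono (hS5.nsmul_mono _ ((hS5.add_mono le_rfl hηv).trans hv1)) hh
    · rw [nsmul_add, hF, hH, hscale, hscale, hwf, hwh, succ_nsmul x]
      calc (n + 2) • (fb + φ) + f₁ + ((n + 2) • (hb + η) + h₁)
          = (n + 2) • ((fb + hb) + (φ + η)) + (f₁ + h₁) := by simp only [nsmul_add]; abel
        _ ≤ (n + 2) • x + x := hS5.add_mono
          (hS5.nsmul_mono _ ((hS5.add_mono le_rfl hφη).trans hr1)) hfhx
    · rw [nsmul_add (a := F), hF, hH, ← nsmul_add]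
      refine rm.le_of_nsmul_le (n := 2) (by omega) ?_
      have hdouble : x' + (fb + hb) ≤
          2 • ((fb + φ + 2 • wf) + (hb + η + 2 • wh)) :=
        calc x' + (fb + hb) ≤ ((fb + hb) + (wf + wh) + (f₂ + h₂ + 2 • (wf + wh))) + (fb + hb) :=
              hS5.add_mono (hxr'.trans (hS5.add_mono le_rfl hrfh)) le_rfl
          _ ≤ ((fb + hb) + (wf + wh) + (f₂ + h₂ + 2 • (wf + wh))) + (fb + hb) + (wf + wh) :=
              hS5.le_add_right _ _
          _ = _ := by
              rw [← hφ, ← hη]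
              simp only [two_nsmul]
              abel
      calc 2 • ((n + 1) • x') = (n + 2) • x' + n • x' := by
            rw [← mul_nsmul, ← add_nsmul]; congr 1; ring
        _ ≤ (n + 2) • x' + (n + 2) • (fb + hb) :=
            hS5.add_mono le_rfl (hn₀.trans (hS5.nsmul_mono _ (hS5.add_mono hfb hhb)))
        _ = (n + 2) • (x' + (fb + hb)) := (nsmul_add _ _ _).symm
        _ ≤ (n + 2) • (2 • ((fb + φ + 2 • wf) + (hb + η + 2 • wh))) :=
            hS5.nsmul_mono _ hdouble
        _ = _ := by rw [← mul_nsmul, ← mul_nsmul, mul_comm]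

end CuO6

/-- `(f ∧ g) + h = (f + h) ∧ (g + h)`. -/
theorem inf_add_shift {S : Type*} [AddCommMonoid S] [PartialOrder S]
    (hS : CuO6 S) (rm : RealMul S) (hd : ∃ D : Set S, D.Countable ∧ IsDenseSub D)
    (f g h p q : S) (hp : IsGLB ({f, g} : Set S) p)
    (hq : IsGLB ({f + h, g + h} : Set S) q) :
    q = p + h := by
  have hS5 := hS.toCuO5
  have hqf : q ≤ f + h := hq.1 (by simp)
  have hqg : q ≤ g + h := hq.1 (by simp)
  apply le_antisymm
  · refine hS5.le_of_forall_cc fun x' hx' => rm.le_of_forall_nsmul_le fun n => ?_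
    obtain ⟨x'', hx1, hx2⟩ := hS5.exists_cc_between hx'
    obtain ⟨f₁, h₁, hf, hh, hfhq, hn⟩ := hS.exists_riesz rm n hx2 hqf
    obtain ⟨f₀, h₀, hf₀, hh₀, hn₀⟩ := hS5.exists_cc_nsmul_add (n + 2) (hx1.nsmul hS5 n) hn
    obtain ⟨h₂, hh₀₂, hh₂⟩ := hS5.exists_cc_between hh₀
    obtain ⟨k, hk1, hk2⟩ := hS5.O5 hh₀₂ (hh₂.le.trans hh)
    have hN : 1 ≤ n + 2 := by omega
    obtain ⟨w, hw⟩ := rm.exists_nsmul_eq hN h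
    have hle : f₁ + h₂ ≤ (g + k) + h₂ :=
      calc f₁ + h₂ ≤ q := (hS5.add_mono le_rfl hh₂.le).trans hfhq
        _ ≤ g + (h₂ + k) := hqg.trans (hS5.add_mono le_rfl hk2)
        _ = _ := by abel
    have hfg : f₁ ≤ g + (k + w) := by
      rw [← add_assoc]
      exact rm.le_add_of_add_le_add_right hS5 hN hle (by rw [hw]; exact hh₂.le.trans hh)
    obtain ⟨e, t, het, heg, hef, htk, -⟩ := hS.O6 hfg hf₀
    have hep : e ≤ p := hp.2 (by
      rintro _ (rfl | rfl)
      exacts [hef.trans hf, heg])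
    have hsum : f₀ + h₀ ≤ p + h + w :=
      calc f₀ + h₀ ≤ (p + (k + w)) + h₀ :=
            hS5.add_mono (het.trans (hS5.add_mono hep htk)) le_rfl
        _ = p + (h₀ + k) + w := by abel
        _ ≤ _ := hS5.add_mono (hS5.add_mono le_rfl hk1) le_rfl
    calc n • x' ≤ (n + 2) • (p + h + w) := hn₀.trans (hS5.nsmul_mono _ hsum)
      _ = (n + 2) • (p + h) + h := by rw [nsmul_add _ w, hw]
      _ ≤ (n + 2) • (p + h) + (p + h) :=
          hS5.add_mono le_rfl ((hS5.le_add_right h p).trans_eq (add_comm _ _))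
      _ = (n + 3) • (p + h) := by rw [← succ_nsmul]
  · refine hq.2 ?_
    rintro _ (rfl | rfl)
    exacts [hS5.addRightMono (hp.1 (by simp)) h, hS5.addRightMono (hp.1 (by simp)) h]
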